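/- Define h(α) = (1 + α²)·Φ(−α) − α·φ(α) for α ≥ 0, where φ(z) = exp(−z²/2)/√(2π) and Φ(z) = ∫_{−∞}^z φ(t) dt. Then h is continuous and strictly decreasing on [0, ∞), h(0) = 1/2, and h(α) → 0 as α → ∞. Consequently, for every real c with 0 < c ≤ 1/2 there exists a unique α ≥ 0 with h(α) = c; in particular, for δ > 0 and γ_s > 0 with (δ/2)·(γ_s² + 1)²/γ_s⁴ ≤ 1/2, the equation (1 + α²)Φ(−α) − αφ(α) = (δ/2)·(γ_s² + 1)²/γ_s⁴ has a unique nonnegative solution α_min(δ, γ_s). -/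

import Mathlib

/-!
Put `g α = φ α - α Φ(-α)`, so that `h' = -2 g` and `g' α = -Φ(-α) < 0`. Comparing the integrals of
`α φ(t)` and `-t φ(t)` over `t ≤ -α` yields the Mills-type bound `α Φ(-α) ≤ φ α`, i.e. `0 ≤ g`, for
all real `α` (`mul_cdf_neg_le`); as `g` is strictly decreasing it is in fact positive
(`mul_cdf_neg_lt`), hence `h` is strictly decreasing. The same bound gives
`-α φ α ≤ h α ≤ α φ α` for `α ≥ 1`, whence `h → 0` at infinity. The value `h 0 = 1/2` is the symmetry
of the Gaussian, and existence of solutions is the intermediate value theorem.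
-/

/-- The standard normal density `φ`. -/
noncomputable def stdGaussianPdf (z : ℝ) : ℝ :=
  Real.exp (-z^2 / 2) / Real.sqrt (2 * Real.pi)

/-- The standard normal cumulative distribution function `Φ`. -/
noncomputable def stdGaussianCdf (z : ℝ) : ℝ :=
  ∫ t in Set.Iic z, stdGaussianPdf t

open MeasureTheory Set Filter Topology

lemma pdf_pos (z : ℝ) : 0 < stdGaussianPdf z := by
  unfold stdGaussianPdf; positivity

lemma pdf_neg (z : ℝ) : stdGaussianPdf (-z) = stdGaussianPdf z := by
  simp [stdGaussianPdf]

lemma pdf_continuous : Continuous stdGaussianPdf := by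
  unfold stdGaussianPdf; fun_prop

lemma pdf_hasDerivAt (z : ℝ) : HasDerivAt stdGaussianPdf (-z * stdGaussianPdf z) z := by
  have h1 : HasDerivAt (fun z : ℝ => -z ^ 2 / 2) (-z) z := by
    have := ((hasDerivAt_pow 2 z).neg).div_const 2
    refine this.congr_deriv ?_
    norm_num
    ring
  have h2 := h1.exp.div_const (Real.sqrt (2 * Real.pi))
  refine h2.congr_deriv ?_
  simp only [stdGaussianPdf]
  ring

lemma pdf_integrable : Integrable stdGaussianPdf := by
  have h := (integrable_exp_neg_mul_sq (b := 1 / 2) (by norm_num)).div_const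
    (Real.sqrt (2 * Real.pi))
  refine h.congr (ae_of_all _ fun x => ?_)
  simp only [stdGaussianPdf]
  ring_nf

lemma neg_mul_pdf_integrable : Integrable (fun t => -t * stdGaussianPdf t) := by
  have h := ((integrable_mul_exp_neg_mul_sq (b := 1 / 2) (by norm_num)).div_const
    (Real.sqrt (2 * Real.pi))).neg
  refine h.congr (ae_of_all _ fun x => ?_)
  simp only [stdGaussianPdf, Pi.neg_apply]
  ring_nf

lemma cdf_hasDerivAt (z : ℝ) : HasDerivAt stdGaussianCdf (stdGaussianPdf z) z := by
  have h : stdGaussianCdf = fun z => stdGaussianCdf 0 + ∫ t in (0:ℝ)..z, stdGaussianPdf t := by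
    funext w
    rw [← intervalIntegral.integral_Iic_sub_Iic pdf_integrable.integrableOn
      pdf_integrable.integrableOn]
    simp only [stdGaussianCdf]
    ring
  rw [h]
  exact (pdf_continuous.integral_hasStrictDerivAt 0 z).hasDerivAt.const_add _

lemma cdf_pos (z : ℝ) : 0 < stdGaussianCdf z := by
  have hsupp : Function.support stdGaussianPdf = univ :=
    eq_univ_of_forall fun t => (pdf_pos t).ne'
  unfold stdGaussianCdf
  rw [setIntegral_pos_iff_support_of_nonneg_ae (ae_of_all _ fun t => (pdf_pos t).le)
    pdf_integrable.integrableOn, hsupp]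
  simp

lemma cdf_zero : stdGaussianCdf 0 = 1 / 2 := by
  have h : stdGaussianCdf 0 = ∫ t in Ioi (0:ℝ), stdGaussianPdf t := by
    have := integral_comp_neg_Iic (0:ℝ) stdGaussianPdf
    simpa only [pdf_neg, neg_zero, stdGaussianCdf] using this
  have h2 : ∫ t in Ioi (0:ℝ), stdGaussianPdf t
      = (∫ t in Ioi (0:ℝ), Real.exp (-(1 / 2) * t ^ 2)) / Real.sqrt (2 * Real.pi) := by
    rw [← integral_div]
    refine integral_congr_ae (ae_of_all _ fun x => ?_)
    simp only [stdGaussianPdf]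
    ring_nf
  have hs : Real.sqrt (2 * Real.pi) ≠ 0 := by positivity
  rw [h, h2, integral_gaussian_Ioi, show Real.pi / (1 / 2) = 2 * Real.pi by ring]
  field_simp

lemma integral_neg_mul_pdf (z : ℝ) :
    ∫ t in Iic z, -t * stdGaussianPdf t = stdGaussianPdf z := by
  have h0 : Tendsto stdGaussianPdf atBot (𝓝 0) :=
    tendsto_zero_of_hasDerivAt_of_integrableOn_Iic (a := z)
      (fun x _ => pdf_hasDerivAt x) neg_mul_pdf_integrable.integrableOn
      pdf_integrable.integrableOn
  rw [integral_Iic_of_hasDerivAt_of_tendsto' (fun x _ => pdf_hasDerivAt x)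
    neg_mul_pdf_integrable.integrableOn h0, sub_zero]

lemma mul_cdf_neg_le (a : ℝ) : a * stdGaussianCdf (-a) ≤ stdGaussianPdf a := by
  rw [← pdf_neg a, ← integral_neg_mul_pdf (-a), stdGaussianCdf, ← integral_const_mul]
  refine setIntegral_mono_on (pdf_integrable.const_mul a).integrableOn
    neg_mul_pdf_integrable.integrableOn measurableSet_Iic fun t ht => ?_
  have : a ≤ -t := by linarith [mem_Iic.1 ht]
  exact mul_le_mul_of_nonneg_right this (pdf_pos t).le

lemma cdf_neg_hasDerivAt (a : ℝ) :
    HasDerivAt (fun a => stdGaussianCdf (-a)) (-stdGaussianPdf a) a := by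
  have := (cdf_hasDerivAt (-a)).comp a (hasDerivAt_neg a)
  simpa [pdf_neg, Function.comp_def] using this

/-- The Mills bound is strict, because the nonnegative difference of the two sides is strictly
decreasing. -/
lemma mul_cdf_neg_lt (a : ℝ) : a * stdGaussianCdf (-a) < stdGaussianPdf a := by
  have hd : ∀ x, HasDerivAt (fun x => stdGaussianPdf x - x * stdGaussianCdf (-x))
      (-stdGaussianCdf (-x)) x := fun x => by
    refine ((pdf_hasDerivAt x).sub ((hasDerivAt_id x).mul (cdf_neg_hasDerivAt x))).congr_deriv ?_
    simp only [id]
    ring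
  have hanti : StrictAnti (fun x => stdGaussianPdf x - x * stdGaussianCdf (-x)) :=
    strictAnti_of_hasDerivAt_neg hd fun x => neg_lt_zero.2 (cdf_pos _)
  have h1 := hanti (lt_add_one a)
  have h2 := mul_cdf_neg_le (a + 1)
  simp only at h1
  linarith

lemma h_hasDerivAt (a : ℝ) :
    HasDerivAt (fun α : ℝ => (1 + α^2) * stdGaussianCdf (-α) - α * stdGaussianPdf α)
      (2 * (a * stdGaussianCdf (-a) - stdGaussianPdf a)) a := by
  have hq : HasDerivAt (fun α : ℝ => 1 + α ^ 2) (2 * a) a := by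
    simpa using (hasDerivAt_pow 2 a).const_add 1
  refine ((hq.mul (cdf_neg_hasDerivAt a)).sub
    ((hasDerivAt_id a).mul (pdf_hasDerivAt a))).congr_deriv ?_
  simp only [id]
  ring

lemma h_strictAnti :
    StrictAnti (fun α : ℝ => (1 + α^2) * stdGaussianCdf (-α) - α * stdGaussianPdf α) :=
  strictAnti_of_hasDerivAt_neg h_hasDerivAt fun a => by linarith [mul_cdf_neg_lt a]

lemma mul_pdf_tendsto : Tendsto (fun a => a * stdGaussianPdf a) atTop (𝓝 0) := by
  have h := (Real.tendsto_pow_mul_exp_neg_atTop_nhds_zero 1).mul_const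
    (Real.exp (1 / 2) / Real.sqrt (2 * Real.pi))
  rw [zero_mul] at h
  refine squeeze_zero' ?_ ?_ h
  · filter_upwards [eventually_ge_atTop 0] with a ha using mul_nonneg ha (pdf_pos a).le
  · filter_upwards [eventually_ge_atTop 0] with a ha
    -- `-a²/2 ≤ 1/2 - a` is `0 ≤ (a - 1)²`.
    have he : Real.exp (-a ^ 2 / 2) ≤ Real.exp (-a) * Real.exp (1 / 2) := by
      rw [← Real.exp_add, Real.exp_le_exp]
      nlinarith [sq_nonneg (a - 1)]
    calc a * stdGaussianPdf a
        ≤ a * (Real.exp (-a) * Real.exp (1 / 2) / Real.sqrt (2 * Real.pi)) := by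
          unfold stdGaussianPdf; gcongr
      _ = _ := by ring

lemma h_tendsto : Tendsto
    (fun α : ℝ => (1 + α^2) * stdGaussianCdf (-α) - α * stdGaussianPdf α) atTop (𝓝 0) := by
  -- For `a ≥ 1` the Mills bound gives `Φ(-a) ≤ φ(a) ≤ a φ(a)` and `a² Φ(-a) ≤ a φ(a)`.
  have hneg := mul_pdf_tendsto.neg
  rw [neg_zero] at hneg
  refine tendsto_of_tendsto_of_tendsto_of_le_of_le' hneg mul_pdf_tendsto ?_ ?_
  · filter_upwards with a
    nlinarith [cdf_pos (-a), sq_nonneg a]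
  · filter_upwards [eventually_ge_atTop 1] with a ha
    have h1 := mul_cdf_neg_le a
    have h2 : a * (a * stdGaussianCdf (-a)) ≤ a * stdGaussianPdf a :=
      mul_le_mul_of_nonneg_left h1 (by linarith)
    have h3 : stdGaussianCdf (-a) ≤ a * stdGaussianCdf (-a) :=
      le_mul_of_one_le_left (cdf_pos _).le ha
    have h4 : stdGaussianPdf a ≤ a * stdGaussianPdf a :=
      le_mul_of_one_le_left (pdf_pos _).le ha
    nlinarith

lemma h_zero :
    (1 + (0:ℝ)^2) * stdGaussianCdf (-(0:ℝ)) - 0 * stdGaussianPdf 0 = 1/2 := by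
  simp [cdf_zero]

lemma h_existsUnique (c : ℝ) (hc : 0 < c) (hc' : c ≤ 1/2) :
    ∃! α : ℝ, 0 ≤ α ∧ (1 + α^2) * stdGaussianCdf (-α) - α * stdGaussianPdf α = c := by
  obtain ⟨b, hb0, hb⟩ :=
    ((eventually_ge_atTop 0).and (h_tendsto.eventually (gt_mem_nhds hc))).exists
  obtain ⟨a, ha, hac⟩ := intermediate_value_Icc' hb0
    (fun x _ => (h_hasDerivAt x).continuousAt.continuousWithinAt)
    (show c ∈ Icc _ _ from ⟨hb.le, hc'.trans h_zero.ge⟩)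
  exact ⟨a, ⟨ha.1, hac⟩, fun y hy => h_strictAnti.injective (hy.2.trans hac.symm)⟩

/-- The function `h(α) = (1 + α²)Φ(−α) − αφ(α)` is continuous and strictly decreasing
on `[0, ∞)`, with `h(0) = 1/2` and `h(α) → 0` as `α → ∞`; consequently for every
`0 < c ≤ 1/2` there is a unique `α ≥ 0` with `h(α) = c`, and in particular for
`δ > 0`, `γ_s > 0` with `(δ/2)(γ_s² + 1)²/γ_s⁴ ≤ 1/2` the equation
`(1 + α²)Φ(−α) − αφ(α) = (δ/2)(γ_s² + 1)²/γ_s⁴` has a unique nonnegative solution. -/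
theorem alpha_min_exists_unique :
    ContinuousOn
      (fun α : ℝ => (1 + α^2) * stdGaussianCdf (-α) - α * stdGaussianPdf α)
      (Set.Ici 0) ∧
    StrictAntiOn
      (fun α : ℝ => (1 + α^2) * stdGaussianCdf (-α) - α * stdGaussianPdf α)
      (Set.Ici 0) ∧
    (1 + (0:ℝ)^2) * stdGaussianCdf (-(0:ℝ)) - 0 * stdGaussianPdf 0 = 1/2 ∧
    Filter.Tendsto
      (fun α : ℝ => (1 + α^2) * stdGaussianCdf (-α) - α * stdGaussianPdf α)
      Filter.atTop (nhds 0) ∧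
    (∀ c : ℝ, 0 < c → c ≤ 1/2 →
      ∃! α : ℝ, 0 ≤ α ∧
        (1 + α^2) * stdGaussianCdf (-α) - α * stdGaussianPdf α = c) ∧
    (∀ δ γs : ℝ, 0 < δ → 0 < γs → (δ/2) * (γs^2 + 1)^2 / γs^4 ≤ 1/2 →
      ∃! α : ℝ, 0 ≤ α ∧
        (1 + α^2) * stdGaussianCdf (-α) - α * stdGaussianPdf α
          = (δ/2) * (γs^2 + 1)^2 / γs^4) := by
  refine ⟨fun x _ => (h_hasDerivAt x).continuousAt.continuousWithinAt,
    h_strictAnti.strictAntiOn _, h_zero, h_tendsto, h_existsUnique, fun δ γs hδ hγ hle => ?_⟩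
  exact h_existsUnique _ (by positivity) hle
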